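/- Assume additionally c₀ ≥ 1. Let T > 0, let N be a positive integer, set τ := T/N and tᵢ := i·τ, and let u : [0, T] → L²(μ) be differentiable with derivative u' such that s ↦ ‖u'(s)‖_{L²(μ)}² is integrable on [0, T]. Then for every n ∈ {1, …, N} and every choice of measurable functions ξ₁, …, ξₙ on Ω one has ∑_{i=1}^{n} D²A(ξᵢ; u(tᵢ) − u(tᵢ₋₁)) ≤ (L + L²·μ(Ω)) · τ · ∫₀^{tₙ} ‖u'(s)‖_{L²(μ)}² ds. -/

import Mathlib

open MeasureTheory

/-!
Since `F ≥ 0` and `c₀ ≥ 1`, the denominator `A ξ` is at least `1` (even for `F ∘ ξ` not integrable,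
when its integral is `0` by convention). The second term of `D²A` is nonpositive and the
first is at most `L / 2 * ‖w‖²`, so everything reduces to
`‖u(tᵢ) - u(tᵢ₋₁)‖² ≤ τ * ∫ ‖u'‖²` over `[tᵢ₋₁, tᵢ]`, which is `norm_sub_sq_le_mul_integral`;
the integrals over consecutive intervals then add up.
-/

/-- The derivative `u'` is not assumed strongly measurable:
pairing `u` with `v = u b - u a` reduces to a
real-valued function, whose derivative satisfies
`⟪v, u' s⟫ ≤ (b - a) / 2 * ‖u' s‖² + ‖v‖² / (2 * (b - a))`, and the last term integrates to
`‖v‖² / 2`, which is absorbed. -/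
lemma norm_sub_sq_le_mul_integral {E : Type*} [NormedAddCommGroup E] [InnerProductSpace ℝ E]
    {u u' : ℝ → E} {a b : ℝ} (hab : a < b)
    (hu : ∀ s ∈ Set.Icc a b, HasDerivWithinAt u (u' s) (Set.Icc a b) s)
    (hu' : IntegrableOn (fun s => ‖u' s‖ ^ 2) (Set.Icc a b)) :
    ‖u b - u a‖ ^ 2 ≤ (b - a) * ∫ s in a..b, ‖u' s‖ ^ 2 := by
  set v := u b - u a with hv
  have hτ : 0 < b - a := sub_pos.2 hab
  have hint : IntervalIntegrable (fun s => ‖u' s‖ ^ 2) volume a b :=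
    (intervalIntegrable_iff_integrableOn_Icc_of_le hab.le).2 hu'
  have key := intervalIntegral.sub_le_integral_of_hasDeriv_right_of_le (a := a) (b := b)
    (g := fun s => inner ℝ v (u s)) (g' := fun s => inner ℝ v (u' s))
    (φ := fun s => (b - a) / 2 * ‖u' s‖ ^ 2 + ‖v‖ ^ 2 / (2 * (b - a))) hab.le
    (fun s hs => continuousWithinAt_const.inner (𝕜 := ℝ) (hu s hs).continuousWithinAt)
    (fun s hs => by
      have h := ((hu s (Set.Ioo_subset_Icc_self hs)).hasDerivAt
        (Icc_mem_nhds hs.1 hs.2)).hasDerivWithinAt (s := Set.Ioi s)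
      simpa using (hasDerivWithinAt_const s (Set.Ioi s) v).inner ℝ h)
    (Integrable.fun_add (hu'.const_mul ((b - a) / 2))
      (integrableOn_const (C := ‖v‖ ^ 2 / (2 * (b - a))) (by simp) (by simp)))
    (fun s _ => by
      have h1 := real_inner_le_norm v (u' s)
      have h2 : (b - a) / 2 * ‖u' s‖ ^ 2 + ‖v‖ ^ 2 / (2 * (b - a)) - ‖v‖ * ‖u' s‖
          = ((b - a) * ‖u' s‖ - ‖v‖) ^ 2 / (2 * (b - a)) := by
        field_simp
        ring
      have h3 : 0 ≤ ((b - a) * ‖u' s‖ - ‖v‖) ^ 2 / (2 * (b - a)) := by positivity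
      linarith)
  rw [intervalIntegral.integral_add (hint.const_mul _) intervalIntegrable_const,
    intervalIntegral.integral_const_mul, intervalIntegral.integral_const, ← inner_sub_right,
    ← hv, real_inner_self_eq_norm_sq] at key
  have h4 : (b - a) • (‖v‖ ^ 2 / (2 * (b - a))) = ‖v‖ ^ 2 / 2 := by
    rw [smul_eq_mul]
    field_simp
  rw [h4] at key
  linarith

lemma integral_sub_sq_eq_norm_sub_sq {Ω : Type*} [MeasurableSpace Ω] {μ : Measure Ω}
    (p q : Lp ℝ 2 μ) :
    Integrable (fun x => (p x - q x) ^ 2) μ ∧ ∫ x, (p x - q x) ^ 2 ∂μ = ‖p - q‖ ^ 2 := by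
  have hae : (fun x => (p x - q x) ^ 2) =ᵐ[μ] fun x => ((p - q : Lp ℝ 2 μ) x) ^ 2 := by
    filter_upwards [Lp.coeFn_sub p q] with x hx
    rw [hx, Pi.sub_apply]
  refine ⟨(Lp.memLp (p - q)).integrable_sq.congr hae.symm, ?_⟩
  rw [integral_congr_ae hae, ← real_inner_self_eq_norm_sq, L2.inner_def]
  simp [pow_two]

/-- Assume additionally `c₀ ≥ 1`. Let `T > 0`, `N` a positive integer,
`τ := T/N`, `tᵢ := i·τ`, and let `u : [0,T] → L²(μ)` be differentiable with derivative `u'`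
such that `s ↦ ‖u'(s)‖²` is integrable on `[0,T]`. Then for every `n ∈ {1,…,N}` and every
choice of measurable functions `ξ₁,…,ξₙ` on `Ω`,
`∑_{i=1}^{n} D²A(ξᵢ; u(tᵢ) − u(tᵢ₋₁)) ≤ (L + L²·μ(Ω))·τ·∫₀^{tₙ} ‖u'(s)‖² ds`. -/
theorem stmt_5
    {Ω : Type*} [MeasurableSpace Ω] (μ : Measure Ω) [IsFiniteMeasure μ]
    (F f : ℝ → ℝ) (hF : ContDiff ℝ 2 F) (hFnonneg : ∀ x, 0 ≤ F x)
    (hf : f = deriv F)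
    (L : ℝ) (hL : 0 ≤ L) (hfb : ∀ x, |f x| ≤ L) (hf'b : ∀ x, |deriv f x| ≤ L)
    (c₀ : ℝ) (hc₀ : 0 < c₀) (hc₀' : 1 ≤ c₀)
    (A : (Ω → ℝ) → ℝ)
    (hA : ∀ v : Ω → ℝ, A v = Real.sqrt ((∫ x, F (v x) ∂μ) + c₀))
    (D2A : (Ω → ℝ) → (Ω → ℝ) → ℝ)
    (hD2A : ∀ ξ w : Ω → ℝ, D2A ξ w
        = (1 / 2) * (∫ x, deriv f (ξ x) * (w x) ^ 2 ∂μ) / A ξ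
          - (1 / 4) * (∫ x, f (ξ x) * w x ∂μ) ^ 2 / (A ξ) ^ 3)
    (T : ℝ) (hT : 0 < T) (N : ℕ) (hN : 0 < N)
    (τ : ℝ) (hτ : τ = T / N) (t : ℕ → ℝ) (ht : ∀ i : ℕ, t i = i * τ)
    (u u' : ℝ → Lp ℝ 2 μ)
    (hu : ∀ s ∈ Set.Icc (0 : ℝ) T, HasDerivWithinAt u (u' s) (Set.Icc (0 : ℝ) T) s)
    (hu' : IntegrableOn (fun s => ‖u' s‖ ^ 2) (Set.Icc (0 : ℝ) T))
    (n : ℕ) (hn : 1 ≤ n) (hnN : n ≤ N)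
    (ξ : ℕ → Ω → ℝ) (hξ : ∀ i, Measurable (ξ i)) :
    ∑ i ∈ Finset.Icc 1 n, D2A (ξ i) (fun x => u (t i) x - u (t (i - 1)) x)
      ≤ (L + L ^ 2 * (μ Set.univ).toReal) * τ * ∫ s in (0 : ℝ)..(t n), ‖u' s‖ ^ 2 := by
  have hD : ∀ (ζ : Ω → ℝ) (p q : Lp ℝ 2 μ),
      D2A ζ (fun x => p x - q x) ≤ L * ‖p - q‖ ^ 2 := by
    intro ζ p q
    obtain ⟨hi, he⟩ := integral_sub_sq_eq_norm_sub_sq p q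
    have hA1 : 1 ≤ A ζ := by
      rw [hA, Real.one_le_sqrt]
      have : 0 ≤ ∫ x, F (ζ x) ∂μ := integral_nonneg fun x => hFnonneg _
      linarith
    have hI : ‖∫ x, deriv f (ζ x) * (p x - q x) ^ 2 ∂μ‖ ≤ L * ‖p - q‖ ^ 2 := by
      rw [← he, ← integral_const_mul]
      refine norm_integral_le_of_norm_le (hi.const_mul L) (.of_forall fun x => ?_)
      rw [norm_mul, norm_pow, Real.norm_eq_abs, Real.norm_eq_abs, sq_abs]
      exact mul_le_mul_of_nonneg_right (hf'b _) (sq_nonneg _)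
    have hI' := (le_abs_self _).trans hI
    have hX : 0 ≤ L * ‖p - q‖ ^ 2 := by positivity
    rw [hD2A]
    have h1 : (1 / 2) * (∫ x, deriv f (ζ x) * (p x - q x) ^ 2 ∂μ) / A ζ
        ≤ L * ‖p - q‖ ^ 2 := by
      rw [div_le_iff₀ (by linarith)]
      nlinarith
    have h2 : 0 ≤ (1 / 4) * (∫ x, f (ζ x) * (p x - q x) ∂μ) ^ 2 / (A ζ) ^ 3 := by
      have : 0 < A ζ := by linarith
      positivity
    linarith
  have hNpos : (0 : ℝ) < N := by exact_mod_cast hN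
  have hτpos : 0 < τ := hτ ▸ div_pos hT hNpos
  have hτN : N * τ = T := by rw [hτ]; field_simp
  have hsucc : ∀ i, t (i + 1) - t i = τ := fun i => by rw [ht, ht]; push_cast; ring
  have h0 : ∀ i, 0 ≤ t i := fun i => by rw [ht]; positivity
  have hle : ∀ i, i ≤ N → t i ≤ T := fun i hi => by
    rw [ht, ← hτN]
    exact mul_le_mul_of_nonneg_right (by exact_mod_cast hi) hτpos.le
  have hsub : ∀ i < n, Set.Icc (t i) (t (i + 1)) ⊆ Set.Icc 0 T := fun i hi =>
    Set.Icc_subset_Icc (h0 i) (hle _ (by omega))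
  have hlt : ∀ i, t i < t (i + 1) := fun i => by linarith [hsucc i]
  have hsum : ∑ i ∈ Finset.range n, ∫ s in t i..t (i + 1), ‖u' s‖ ^ 2
      = ∫ s in (0 : ℝ)..(t n), ‖u' s‖ ^ 2 := by
    rw [intervalIntegral.sum_integral_adjacent_intervals fun i hi =>
      (intervalIntegrable_iff_integrableOn_Icc_of_le (hlt i).le).2 (hu'.mono_set (hsub i hi))]
    simp [ht 0]
  have hnn : 0 ≤ ∫ s in (0 : ℝ)..(t n), ‖u' s‖ ^ 2 :=
    intervalIntegral.integral_nonneg (h0 n) fun s _ => by positivity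
  calc ∑ i ∈ Finset.Icc 1 n, D2A (ξ i) (fun x => u (t i) x - u (t (i - 1)) x)
      = ∑ i ∈ Finset.range n, D2A (ξ (i + 1)) (fun x => u (t (i + 1)) x - u (t i) x) := by
        rw [← Finset.Ico_add_one_right_eq_Icc, Finset.sum_Ico_eq_sum_range]
        simp [add_comm]
    _ ≤ ∑ i ∈ Finset.range n, L * (τ * ∫ s in t i..t (i + 1), ‖u' s‖ ^ 2) := by
        refine Finset.sum_le_sum fun i hi => (hD _ _ _).trans ?_
        have hin := hsub i (Finset.mem_range.1 hi)
        rw [← hsucc i]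
        exact mul_le_mul_of_nonneg_left (norm_sub_sq_le_mul_integral (hlt i)
          (fun s hs => (hu s (hin hs)).mono hin) (hu'.mono_set hin)) hL
    _ = L * τ * ∫ s in (0 : ℝ)..(t n), ‖u' s‖ ^ 2 := by
        rw [← Finset.mul_sum, ← Finset.mul_sum, hsum, mul_assoc]
    _ ≤ _ := by
        gcongr
        have : 0 ≤ L ^ 2 * (μ Set.univ).toReal := by positivity
        linarith
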